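/- Let a contractive local IFS on a compact metric space X have local attractor A ≠ ∅, code space Σ and code map π. Define the extended shift space Σ̂ := {(b, a) : b ∈ Σ and a is an admissible itinerary from π(b)}. Then: (1) {π(b) : (b,a) ∈ Σ̂ for some a} = A^∞; (2) the extended two-sided shift ŝ(b, a) := (b ∗ a(0), σa), where σa := (j ↦ a(j+1)), maps Σ̂ into Σ̂, and moreover π(b ∗ a(0)) = f_{a(0)}(π(b)) for every (b,a) ∈ Σ̂. -/

import Mathlib

/-- The cylinder sets of a local IFS: `cylinder f Xs k b` is the set
`V_b(k+1)` of the left-infinite word encoded by `b : ℕ → Fin n`. -/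
def cylinder {X : Type*} {n : ℕ} (f : Fin n → X → X) (Xs : Fin n → Set X) :
    ℕ → (ℕ → Fin n) → Set X
  | 0, b => f (b 0) '' Xs (b 0)
  | k + 1, b => f (b 0) '' (cylinder f Xs k (fun j => b (j + 1)) ∩ Xs (b 0))

/-- The code space of a local IFS: the set of left-infinite words all of whose
cylinder sets are nonempty. -/
def codeSpace {X : Type*} {n : ℕ} (f : Fin n → X → X) (Xs : Fin n → Set X) :
    Set (ℕ → Fin n) :=
  {b | ∀ k : ℕ, (cylinder f Xs k b).Nonempty}

/-- Concatenation `b ∗ j` of a left-infinite word `b` with a symbol `j`. -/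
def concat {n : ℕ} (b : ℕ → Fin n) (j : Fin n) : ℕ → Fin n
  | 0 => j
  | k + 1 => b k

/-- The orbit of a point `x` of a local IFS directed by the itinerary `a`. -/
def orbitSeq {X : Type*} {n : ℕ} (f : Fin n → X → X) (x : X) (a : ℕ → Fin n) : ℕ → X
  | 0 => x
  | i + 1 => f (a i) (orbitSeq f x a i)

/-- The extended shift space `Σ̂` of a local IFS relative to the code map `π`:
pairs `(b, a)` where `b` lies in the code space and `a` is an admissible
itinerary from `π b`. -/
def extShiftSpace {X : Type*} {n : ℕ} (f : Fin n → X → X) (Xs : Fin n → Set X)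
    (π : (ℕ → Fin n) → X) : Set ((ℕ → Fin n) × (ℕ → Fin n)) :=
  {p | p.1 ∈ codeSpace f Xs ∧ ∀ i : ℕ, orbitSeq f (π p.1) p.2 i ∈ Xs (p.2 i)}

open Filter Topology

section LocalIFS

variable {X : Type*} {n : ℕ} {f : Fin n → X → X} {Xs : Fin n → Set X}

theorem shift_mem_codeSpace {b : ℕ → Fin n} (hb : b ∈ codeSpace f Xs) :
    (fun j => b (j + 1)) ∈ codeSpace f Xs := by
  intro k
  obtain ⟨_, y, hy, _⟩ := hb (k + 1)
  exact ⟨y, hy.1⟩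

theorem map_mem_cylinder {b : ℕ → Fin n} {x : X}
    (hx : ∀ k, x ∈ cylinder f Xs k (fun j => b (j + 1))) (hxb : x ∈ Xs (b 0)) (k : ℕ) :
    f (b 0) x ∈ cylinder f Xs k b := by
  cases k with
  | zero => exact ⟨x, hxb, rfl⟩
  | succ k => exact ⟨x, ⟨hx k, hxb⟩, rfl⟩

theorem mem_cylinder_of_backward_orbit (k : ℕ) {b : ℕ → Fin n} {z : ℕ → X}
    (hz : ∀ i, z (i + 1) ∈ Xs (b i)) (hfz : ∀ i, f (b i) (z (i + 1)) = z i) :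
    z 0 ∈ cylinder f Xs k b := by
  induction k generalizing b z with
  | zero => exact ⟨z 1, hz 0, hfz 0⟩
  | succ k ih =>
    exact ⟨z 1, ⟨ih (b := fun i => b (i + 1)) (z := fun i => z (i + 1))
      (fun i => hz (i + 1)) (fun i => hfz (i + 1)), hz 0⟩, hfz 0⟩

theorem orbitSeq_shift (x : X) (a : ℕ → Fin n) (i : ℕ) :
    orbitSeq f (f (a 0) x) (fun j => a (j + 1)) i = orbitSeq f x a (i + 1) := by
  induction i with
  | zero => rfl
  | succ i ih => exact congrArg (f (a (i + 1))) ih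

/-- A set that is contained in its image under a local Hutchinson–Barnsley operator is contained
in the local attractor. -/
theorem subset_attractor_of_subset_image {F : Set X → Set X}
    (hF : ∀ B, F B = ⋃ j, f j '' (B ∩ Xs j)) {B : Set X} (hB : B ⊆ F B) :
    B ⊆ ⋃₀ {C : Set X | F C = C} := by
  have hmono : Monotone F := by
    intro C D hCD
    rw [hF, hF]
    gcongr
  have hUnion : F (⋃ k : ℕ, F^[k] B) = ⋃ k : ℕ, F^[k + 1] B := by
    simp only [Function.iterate_succ_apply', hF (⋃ k : ℕ, F^[k] B), hF (F^[_] B),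
      Set.iUnion_inter, Set.image_iUnion]
    rw [Set.iUnion_comm]
  refine fun x hx => ⟨⋃ k : ℕ, F^[k] B, ?_, Set.mem_iUnion.2 ⟨0, hx⟩⟩
  refine hUnion.trans (subset_antisymm ?_ ?_)
  · exact Set.iUnion_subset fun k => Set.subset_iUnion (fun k : ℕ => F^[k] B) (k + 1)
  · exact Set.iUnion_mono fun k => hmono.monotone_iterate_of_le_map hB (Nat.le_succ k)

/-- Every point of the local attractor has an infinite backward orbit, which codes it. -/
theorem exists_code_of_mem_attractor {F : Set X → Set X}
    (hF : ∀ B, F B = ⋃ j, f j '' (B ∩ Xs j)) {x : X} (hx : x ∈ ⋃₀ {B : Set X | F B = B}) :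
    ∃ b : ℕ → Fin n, ∀ k, x ∈ cylinder f Xs k b := by
  obtain ⟨B, hB, hxB⟩ := hx
  have hpre : ∀ y : B, ∃ (j : Fin n) (w : B), (w : X) ∈ Xs j ∧ f j w = y := by
    rintro ⟨y, hy⟩
    rw [← show F B = B from hB, hF] at hy
    obtain ⟨j, w, ⟨hwB, hwj⟩, hw⟩ := Set.mem_iUnion.1 hy
    exact ⟨j, ⟨w, hwB⟩, hwj, hw⟩
  choose code pre hmem hmap using hpre
  refine ⟨fun i => code (pre^[i] ⟨x, hxB⟩), fun k =>
    mem_cylinder_of_backward_orbit k (z := fun i => (pre^[i] ⟨x, hxB⟩).1) ?_ ?_⟩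
  · intro i
    simpa only [Function.iterate_succ_apply'] using hmem _
  · intro i
    simpa only [Function.iterate_succ_apply'] using hmap _

variable [MetricSpace X] [CompactSpace X] {L : ℝ}

theorem dist_le_of_mem_cylinder (hL0 : 0 ≤ L)
    (hcontr : ∀ j, ∀ x ∈ Xs j, ∀ y ∈ Xs j, dist (f j x) (f j y) ≤ L * dist x y)
    (k : ℕ) {b : ℕ → Fin n} {x y : X}
    (hx : x ∈ cylinder f Xs k b) (hy : y ∈ cylinder f Xs k b) :
    dist x y ≤ L ^ k * Metric.diam (Set.univ : Set X) := by
  induction k generalizing b x y with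
  | zero =>
    simpa using Metric.dist_le_diam_of_mem (isCompact_univ (X := X)).isBounded
      (Set.mem_univ x) (Set.mem_univ y)
  | succ k ih =>
    obtain ⟨u, ⟨hu, hu'⟩, rfl⟩ := hx
    obtain ⟨v, ⟨hv, hv'⟩, rfl⟩ := hy
    calc dist (f (b 0) u) (f (b 0) v) ≤ L * dist u v := hcontr _ u hu' v hv'
      _ ≤ L * (L ^ k * Metric.diam Set.univ) := by gcongr; exact ih hu hv
      _ = L ^ (k + 1) * Metric.diam Set.univ := by ring

/-- Points chosen in the successive cylinder sets of a word converge to their common point. -/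
theorem tendsto_of_mem_cylinder (hL0 : 0 ≤ L) (hL1 : L < 1)
    (hcontr : ∀ j, ∀ x ∈ Xs j, ∀ y ∈ Xs j, dist (f j x) (f j y) ≤ L * dist x y)
    {b : ℕ → Fin n} {u : ℕ → X} {x : X} (hu : ∀ k, u k ∈ cylinder f Xs k b)
    (hx : ∀ k, x ∈ cylinder f Xs k b) : Tendsto u atTop (𝓝 x) := by
  refine tendsto_iff_dist_tendsto_zero.2 (squeeze_zero (fun _ => dist_nonneg)
    (fun k => dist_le_of_mem_cylinder hL0 hcontr k (hu k) (hx k)) ?_)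
  simpa using (tendsto_pow_atTop_nhds_zero_of_lt_one hL0 hL1).mul_const
    (Metric.diam (Set.univ : Set X))

theorem eq_of_forall_mem_cylinder (hL0 : 0 ≤ L) (hL1 : L < 1)
    (hcontr : ∀ j, ∀ x ∈ Xs j, ∀ y ∈ Xs j, dist (f j x) (f j y) ≤ L * dist x y)
    {b : ℕ → Fin n} {x y : X} (hx : ∀ k, x ∈ cylinder f Xs k b)
    (hy : ∀ k, y ∈ cylinder f Xs k b) : x = y :=
  tendsto_nhds_unique tendsto_const_nhds (tendsto_of_mem_cylinder hL0 hL1 hcontr hx hy)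

/-- If `x` is coded by `b` and `y` is coded by the shift of `b`, then `f (b 0)` is admissible
at `y` and maps it to `x`. -/
theorem mem_and_map_eq_of_mem_cylinder_shift (hXs : ∀ j, IsClosed (Xs j))
    (hL0 : 0 ≤ L) (hL1 : L < 1)
    (hcontr : ∀ j, ∀ x ∈ Xs j, ∀ y ∈ Xs j, dist (f j x) (f j y) ≤ L * dist x y)
    {b : ℕ → Fin n} {x y : X} (hx : ∀ k, x ∈ cylinder f Xs k b)
    (hy : ∀ k, y ∈ cylinder f Xs k (fun j => b (j + 1))) :
    y ∈ Xs (b 0) ∧ f (b 0) y = x := by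
  choose u hu hfu using fun k => hx (k + 1)
  have hlim : Tendsto u atTop (𝓝 y) :=
    tendsto_of_mem_cylinder hL0 hL1 hcontr (fun k => (hu k).1) hy
  have hyX : y ∈ Xs (b 0) := (hXs _).mem_of_tendsto hlim (Eventually.of_forall fun k => (hu k).2)
  exact ⟨hyX, eq_of_forall_mem_cylinder hL0 hL1 hcontr (map_mem_cylinder hy hyX) hx⟩

end LocalIFS

/-- For a contractive local IFS with nonempty local attractor `A`,
code space `Σ` and code map `π`, the extended shift space
`Σ̂ = {(b,a) : b ∈ Σ, a admissible from π b}` satisfies: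
(1) `{π b : (b,a) ∈ Σ̂}` equals `A^∞`, the set of points of `A` with infinite orbits;
(2) the extended two-sided shift `ŝ(b,a) = (b ∗ a 0, σ a)` maps `Σ̂` into itself,
and `π (b ∗ a 0) = f (a 0) (π b)` for every `(b,a) ∈ Σ̂`. -/
theorem extShiftSpace_props {X : Type*} [MetricSpace X] [CompactSpace X]
    {n : ℕ} (hn : 0 < n)
    (Xs : Fin n → Set X) (hXs : ∀ j, IsClosed (Xs j))
    (f : Fin n → X → X)
    (lam : Fin n → ℝ) (hlam0 : ∀ j, 0 ≤ lam j) (hlam1 : ∀ j, lam j < 1)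
    (hcontr : ∀ j, ∀ x ∈ Xs j, ∀ y ∈ Xs j, dist (f j x) (f j y) ≤ lam j * dist x y)
    (F : Set X → Set X) (hF : ∀ B, F B = ⋃ j, f j '' (B ∩ Xs j))
    (A : Set X) (hA : A = ⋃₀ {B : Set X | F B = B}) (hAne : A.Nonempty)
    (π : (ℕ → Fin n) → X)
    (hπ : ∀ b ∈ codeSpace f Xs, ∀ k : ℕ, π b ∈ cylinder f Xs k b) :
    ((fun p : (ℕ → Fin n) × (ℕ → Fin n) => π p.1) '' extShiftSpace f Xs π
        = {x ∈ A | ∃ a : ℕ → Fin n, ∀ i : ℕ, orbitSeq f x a i ∈ Xs (a i)}) ∧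
      (∀ p ∈ extShiftSpace f Xs π,
        (concat p.1 (p.2 0), fun j => p.2 (j + 1)) ∈ extShiftSpace f Xs π ∧
          π (concat p.1 (p.2 0)) = f (p.2 0) (π p.1)) := by
  obtain ⟨L, hL0, hL1, hL⟩ : ∃ L : ℝ, 0 ≤ L ∧ L < 1 ∧
      ∀ j, ∀ x ∈ Xs j, ∀ y ∈ Xs j, dist (f j x) (f j y) ≤ L * dist x y := by
    have : Nonempty (Fin n) := ⟨⟨0, hn⟩⟩
    obtain ⟨m, hm⟩ := Finite.exists_max lam
    exact ⟨lam m, hlam0 m, hlam1 m, fun j x hx y hy => (hcontr j x hx y hy).trans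
      (mul_le_mul_of_nonneg_right (hm j) dist_nonneg)⟩
  subst hA
  refine ⟨Set.Subset.antisymm ?_ ?_, ?_⟩
  · rintro _ ⟨⟨b, a⟩, ⟨hb, ha⟩, rfl⟩
    refine ⟨subset_attractor_of_subset_image hF (B := π '' codeSpace f Xs) ?_ ⟨b, hb, rfl⟩, a, ha⟩
    rintro _ ⟨c, hc, rfl⟩
    have hc' := shift_mem_codeSpace hc
    obtain ⟨hmem, hmap⟩ :=
      mem_and_map_eq_of_mem_cylinder_shift hXs hL0 hL1 hL (hπ c hc) (hπ _ hc')
    rw [hF]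
    exact Set.mem_iUnion.2 ⟨c 0, _, ⟨⟨_, hc', rfl⟩, hmem⟩, hmap⟩
  · rintro x ⟨hx, a, ha⟩
    obtain ⟨b, hb⟩ := exists_code_of_mem_attractor hF hx
    have hbmem : b ∈ codeSpace f Xs := fun k => ⟨x, hb k⟩
    have hbx : π b = x := eq_of_forall_mem_cylinder hL0 hL1 hL (hπ b hbmem) hb
    exact ⟨(b, a), ⟨hbmem, fun i => by simpa only [hbx] using ha i⟩, hbx⟩
  · rintro ⟨b, a⟩ ⟨hb, ha⟩
    have hcyl := map_mem_cylinder (b := concat b (a 0)) (hπ b hb) (ha 0)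
    have hmem : concat b (a 0) ∈ codeSpace f Xs := fun k => ⟨_, hcyl k⟩
    have heq : π (concat b (a 0)) = f (a 0) (π b) :=
      eq_of_forall_mem_cylinder hL0 hL1 hL (hπ _ hmem) hcyl
    refine ⟨⟨hmem, fun i => ?_⟩, heq⟩
    simpa only [heq, orbitSeq_shift] using ha (i + 1)
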